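/- Every sharp generalized Whitney polynomial p in n ≥ 2 variables lies in 𝓗 and satisfies N(p) = (n − 1)·deg(p) + 1, i.e., deg(p) = (N(p) − 1)/(n − 1). -/

import Mathlib

/-! Each step of the inductive construction removes one monomial `x^α` of top degree `d` and adds
the `n` monomials `x^α xᵢ`, which have degree `d + 1` and hence are new: no cancellation or
collision can occur. So the degree grows by `1` and the number of monomials by `n - 1`, and the
claim follows by induction from `s` itself, which has `n = (n - 1) · 1 + 1` monomials. Membership
in `𝓗` is inherited because the new coefficients equal `p_α ≥ 0` and `s = 1` on the hyperplane.
The combinatorial content is in `support_step` and `totalDegree_eq_of_support`. -/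

open MvPolynomial

/-- `𝓗`: polynomials with nonnegative coefficients that are `1`
on the hyperplane `x₁ + ⋯ + xₙ = 1`. -/
def InH (n : ℕ) (p : MvPolynomial (Fin n) ℝ) : Prop :=
  (∀ α : Fin n →₀ ℕ, 0 ≤ p.coeff α) ∧
  ∀ x : Fin n → ℝ, (∑ i, x i) = 1 → eval x p = 1

/-- `N(p)`: the number of monomials of `p` with nonzero coefficient. -/
def Nmon {n : ℕ} (p : MvPolynomial (Fin n) ℝ) : ℕ := p.support.card

/-- Sharp generalized Whitney polynomials: the smallest set of polynomials
containing `s = x₁ + ⋯ + xₙ` and closed under replacing a term `c·x^α` of top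
degree (`c ≠ 0`, `|α| = deg p`) by `c·x^α·s`. -/
inductive IsSGW (n : ℕ) : MvPolynomial (Fin n) ℝ → Prop
  | base : IsSGW n (∑ i, X i)
  | step (p : MvPolynomial (Fin n) ℝ) (α : Fin n →₀ ℕ) (h : IsSGW n p)
      (hc : p.coeff α ≠ 0) (hdeg : (∑ i, α i) = p.totalDegree) :
      IsSGW n (p - monomial α (p.coeff α) + monomial α (p.coeff α) * ∑ i, X i)

/-- The exponents of the monomials of `x^α · (x₁ + ⋯ + xₙ)`. -/
noncomputable def shifts {n : ℕ} (α : Fin n →₀ ℕ) : Finset (Fin n →₀ ℕ) :=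
  Finset.univ.image fun i => α + Finsupp.single i 1

lemma shift_injective {n : ℕ} (α : Fin n →₀ ℕ) :
    Function.Injective fun i : Fin n => α + Finsupp.single i 1 := by
  intro i j hij
  exact Finsupp.single_left_injective one_ne_zero (add_left_cancel hij)

lemma card_shifts {n : ℕ} (α : Fin n →₀ ℕ) : (shifts α).card = n := by
  simp [shifts, Finset.card_image_of_injective _ (shift_injective α)]

lemma degree_of_mem_shifts {n : ℕ} {α β : Fin n →₀ ℕ} (h : β ∈ shifts α) :
    β.degree = α.degree + 1 := by
  obtain ⟨i, -, rfl⟩ := Finset.mem_image.1 h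
  simp [map_add, Finsupp.degree_single]

lemma coeff_monomial_mul_sum_X {n : ℕ} (α β : Fin n →₀ ℕ) (c : ℝ) :
    coeff β (monomial α c * ∑ i, X i : MvPolynomial (Fin n) ℝ) =
      if β ∈ shifts α then c else 0 := by
  have h : (monomial α c * ∑ i, X i : MvPolynomial (Fin n) ℝ) =
      ∑ γ ∈ shifts α, monomial γ c := by
    rw [shifts, Finset.sum_image (shift_injective α).injOn, Finset.mul_sum]
    simp [X, monomial_mul]
  rw [h, coeff_sum]
  simp [coeff_monomial]

lemma coeff_sum_X {n : ℕ} (β : Fin n →₀ ℕ) :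
    coeff β (∑ i, X i : MvPolynomial (Fin n) ℝ) = if β ∈ shifts 0 then 1 else 0 := by
  rw [← coeff_monomial_mul_sum_X, show monomial (0 : Fin n →₀ ℕ) (1 : ℝ) = 1 from rfl, one_mul]

lemma totalDegree_eq_of_support {n : ℕ} {p : MvPolynomial (Fin n) ℝ} {d : ℕ}
    (hle : ∀ β ∈ p.support, β.degree ≤ d) (hex : ∃ β ∈ p.support, β.degree = d) :
    p.totalDegree = d := by
  obtain ⟨β, hβ, rfl⟩ := hex
  exact le_antisymm (Finset.sup_le hle) (le_totalDegree hβ)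

lemma degree_le_of_mem_support {n : ℕ} {p : MvPolynomial (Fin n) ℝ} {β : Fin n →₀ ℕ}
    (h : β ∈ p.support) : β.degree ≤ p.totalDegree :=
  le_totalDegree h

lemma shifts_nonempty {n : ℕ} (hn : 2 ≤ n) (α : Fin n →₀ ℕ) : (shifts α).Nonempty := by
  rw [← Finset.card_pos, card_shifts]
  omega

lemma support_sum_X (n : ℕ) : (∑ i, X i : MvPolynomial (Fin n) ℝ).support = shifts 0 := by
  ext β
  simp [mem_support_iff, coeff_sum_X]

lemma coeff_eq_zero_of_mem_shifts {n : ℕ} {p : MvPolynomial (Fin n) ℝ} {α β : Fin n →₀ ℕ}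
    (hdeg : α.degree = p.totalDegree) (h : β ∈ shifts α) : coeff β p = 0 := by
  by_contra hne
  have := degree_le_of_mem_support (mem_support_iff.2 hne)
  have := degree_of_mem_shifts h
  omega

lemma coeff_step {n : ℕ} (p : MvPolynomial (Fin n) ℝ) (α β : Fin n →₀ ℕ) :
    coeff β (p - monomial α (p.coeff α) + monomial α (p.coeff α) * ∑ i, X i) =
      (if β = α then 0 else coeff β p) + if β ∈ shifts α then coeff α p else 0 := by
  rw [coeff_add, coeff_sub, coeff_monomial_mul_sum_X, coeff_monomial]
  rcases eq_or_ne β α with rfl | h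
  · simp
  · simp [h, h.symm]

lemma support_step {n : ℕ} {p : MvPolynomial (Fin n) ℝ} {α : Fin n →₀ ℕ}
    (hc : p.coeff α ≠ 0) (hdeg : α.degree = p.totalDegree) :
    (p - monomial α (p.coeff α) + monomial α (p.coeff α) * ∑ i, X i).support =
      p.support.erase α ∪ shifts α := by
  ext β
  rw [mem_support_iff, coeff_step, Finset.mem_union, Finset.mem_erase, mem_support_iff]
  by_cases h : β ∈ shifts α
  · simp [h, coeff_eq_zero_of_mem_shifts hdeg h, hc]
  · simp [h]

/-- every sharp generalized Whitney polynomial in `n ≥ 2`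
variables lies in `𝓗` and satisfies `N(p) = (n−1)·deg(p) + 1`. -/
theorem stmt7 (n : ℕ) (hn : 2 ≤ n) (p : MvPolynomial (Fin n) ℝ)
    (h : IsSGW n p) :
    InH n p ∧ Nmon p = (n - 1) * p.totalDegree + 1 := by
  induction h with
  | base =>
    refine ⟨⟨fun β => ?_, fun x hx => ?_⟩, ?_⟩
    · rw [coeff_sum_X]
      split_ifs <;> norm_num
    · simpa using hx
    · have hd : (∑ i, X i : MvPolynomial (Fin n) ℝ).totalDegree = 1 := by
        apply totalDegree_eq_of_support
        · intro β hβ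
          rw [support_sum_X] at hβ
          simpa using (degree_of_mem_shifts hβ).le
        · obtain ⟨β, hβ⟩ := shifts_nonempty hn 0
          exact ⟨β, by rwa [support_sum_X], by simpa using degree_of_mem_shifts hβ⟩
      rw [hd, Nmon, support_sum_X, card_shifts]
      omega
  | step p α _ hc hdeg ih =>
    obtain ⟨⟨hnn, hone⟩, hN⟩ := ih
    rw [← Finsupp.degree_eq_sum] at hdeg
    refine ⟨⟨fun β => ?_, fun x hx => ?_⟩, ?_⟩
    · rw [coeff_step]
      have h₁ := hnn α
      have h₂ := hnn β
      split_ifs <;> linarith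
    · simp only [map_add, map_sub, map_mul, map_sum, eval_X, hx, hone x hx]
      ring
    · have hd : (p - monomial α (p.coeff α) +
          monomial α (p.coeff α) * ∑ i, X i).totalDegree = p.totalDegree + 1 := by
        apply totalDegree_eq_of_support
        · intro β hβ
          rw [support_step hc hdeg, Finset.mem_union] at hβ
          rcases hβ with hβ | hβ
          · exact (degree_le_of_mem_support (Finset.mem_of_mem_erase hβ)).trans (Nat.le_succ _)
          · rw [degree_of_mem_shifts hβ, hdeg]
        · obtain ⟨β, hβ⟩ := shifts_nonempty hn α
          refine ⟨β, ?_, by rw [degree_of_mem_shifts hβ, hdeg]⟩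
          rw [support_step hc hdeg]
          exact Finset.mem_union_right _ hβ
      have hdisj : Disjoint (p.support.erase α) (shifts α) := by
        rw [Finset.disjoint_right]
        intro β hβ hβ'
        exact mem_support_iff.1 (Finset.mem_of_mem_erase hβ') (coeff_eq_zero_of_mem_shifts hdeg hβ)
      rw [hd, Nmon, support_step hc hdeg, Finset.card_union_of_disjoint hdisj, card_shifts,
        Finset.card_erase_of_mem (mem_support_iff.2 hc)]
      rw [Nmon] at hN
      rw [hN, mul_add]
      omega
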